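/- arXiv:1601.01093 — 2 statements merged into one kernel-verified Lean document; each statement's English description precedes it below -/
import Mathlib

section
/- Let X be a nonnegative real random variable on a probability space. Suppose that for every p > 0 there exist constants C_p > 0 and Λ_p ≥ 1 such that E[e^{−λX}] ≤ C_p · λ^{−p} for all λ ≥ Λ_p. Then X > 0 almost surely, and for every q > 0 the negative-order moment E[X^{−q}] is finite. -/
/-!
The power `x ^ (-q)` is dominated by a series of exponentials: if `0 < x ≤ 1` and `n = ⌊1 / x⌋ + 1`,
then `x ^ (-q) ≤ n ^ q` while `n x ≤ 2`, so `x ^ (-q) ≤ n ^ q e ^ (2 - n x)`. Hence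
`x ^ (-q) ≤ 1 + ∑ n ≥ 1, n ^ q e ^ (2 - n x)` for all `x ≥ 0`, both sides being infinite at `0`
(`ofReal_rpow_neg_le_tsum`). Taking expectations term by term, the decay hypothesis with
`p = q + 2` makes the `n`-th term `O(n ^ (-2))`, so every negative moment is finite. Almost sure
positivity follows, since `X ^ (-1)` has finite expectation and is infinite where `X = 0`.
-/

open MeasureTheory Real

lemma ofReal_rpow_neg_le_tsum {x q : ℝ} (hx : 0 ≤ x) (hq : 0 < q) :
    (ENNReal.ofReal x) ^ (-q) ≤ 1 + ∑' n : ℕ,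
      ENNReal.ofReal (((n + 1 : ℕ) : ℝ) ^ q * exp 2 * exp (-(((n + 1 : ℕ) : ℝ) * x))) := by
  rcases hx.eq_or_lt with rfl | hx
  · have h : (⊤ : ENNReal) ≤ ∑' n : ℕ,
        ENNReal.ofReal (((n + 1 : ℕ) : ℝ) ^ q * exp 2 * exp (-(((n + 1 : ℕ) : ℝ) * 0))) := by
      rw [← ENNReal.tsum_const_eq_top_of_ne_zero (α := ℕ) (c := 1) one_ne_zero]
      refine ENNReal.tsum_le_tsum fun n => ?_
      rw [ENNReal.one_le_ofReal]
      have h1 : (1 : ℝ) ≤ ((n + 1 : ℕ) : ℝ) ^ q :=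
        one_le_rpow (by push_cast; linarith [n.cast_nonneg (α := ℝ)]) hq.le
      have h2 : (1 : ℝ) ≤ exp 2 := one_le_exp (by norm_num)
      simpa using one_le_mul_of_one_le_of_one_le h1 h2
    rw [top_le_iff.1 h]
    simp
  · rw [ENNReal.ofReal_rpow_of_pos hx]
    rcases le_total 1 x with h1 | h1
    · refine le_trans ?_ le_self_add
      rw [ENNReal.ofReal_le_one]
      exact rpow_le_one_of_one_le_of_nonpos h1 (by linarith)
    · refine le_trans ?_ le_add_self
      -- The index `⌊1 / x⌋` corresponds to the integer `⌊1 / x⌋ + 1 ∈ (1 / x, 1 / x + 1]`.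
      refine le_trans ?_ (ENNReal.le_tsum ⌊x⁻¹⌋₊)
      apply ENNReal.ofReal_le_ofReal
      have hlo : x⁻¹ ≤ ((⌊x⁻¹⌋₊ + 1 : ℕ) : ℝ) := by
        push_cast; exact (Nat.lt_floor_add_one _).le
      have hup : ((⌊x⁻¹⌋₊ + 1 : ℕ) : ℝ) * x ≤ 2 := by
        have := Nat.floor_le (inv_pos.2 hx).le
        push_cast
        have h3 : (⌊x⁻¹⌋₊ : ℝ) * x ≤ x⁻¹ * x := mul_le_mul_of_nonneg_right this hx.le
        rw [inv_mul_cancel₀ hx.ne'] at h3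
        linarith
      rw [mul_assoc, ← exp_add, rpow_neg hx.le, ← inv_rpow hx.le]
      have h4 : x⁻¹ ^ q ≤ ((⌊x⁻¹⌋₊ + 1 : ℕ) : ℝ) ^ q :=
        rpow_le_rpow (inv_pos.2 hx).le hlo hq.le
      exact h4.trans (le_mul_of_one_le_right (by positivity) (one_le_exp (by linarith)))

/-- If a nonnegative random variable `X` satisfies, for every `p > 0`,
`E[e^{-l X}] ≤ C_p l^{-p}` for all large `l`, then `X > 0` a.s. and all
negative-order moments `E[X^{-q}]` (with the convention `0^{-q} = ∞`) are finite. -/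
theorem finite_negative_moments_of_laplace_decay
    {Ω : Type*} [MeasurableSpace Ω] (P : Measure Ω) [IsProbabilityMeasure P]
    (X : Ω → ℝ) (hX : Measurable X) (hnn : ∀ ω, 0 ≤ X ω)
    (hdecay : ∀ p > (0 : ℝ), ∃ C > (0 : ℝ), ∃ Λ ≥ (1 : ℝ), ∀ l ≥ Λ,
      (∫ ω, Real.exp (-(l * X ω)) ∂P) ≤ C * l ^ (-p)) :
    (∀ᵐ ω ∂P, 0 < X ω) ∧
      ∀ q > (0 : ℝ), ∫⁻ ω, (ENNReal.ofReal (X ω)) ^ (-q) ∂P < ⊤ := by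
  have key : ∀ q > (0 : ℝ), ∫⁻ ω, (ENNReal.ofReal (X ω)) ^ (-q) ∂P < ⊤ := by
    intro q hq
    obtain ⟨C, hC, L, hL, h⟩ := hdecay (q + 2) (by linarith)
    refine (lintegral_mono fun ω => ofReal_rpow_neg_le_tsum (hnn ω) hq).trans_lt ?_
    rw [lintegral_add_left measurable_const, lintegral_tsum (fun n => by fun_prop)]
    refine ENNReal.add_lt_top.2 ⟨by simp, ?_⟩
    have hint : ∀ n : ℕ, Integrable (fun ω => exp (-(((n + 1 : ℕ) : ℝ) * X ω))) P := by
      intro n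
      refine Integrable.of_bound (by fun_prop) 1 (Filter.Eventually.of_forall fun ω => ?_)
      rw [norm_of_nonneg (exp_pos _).le, exp_le_one_iff]
      have := mul_nonneg (Nat.cast_nonneg (α := ℝ) (n + 1)) (hnn ω)
      linarith
    have heq : ∀ n : ℕ, ∫⁻ ω, ENNReal.ofReal
        (((n + 1 : ℕ) : ℝ) ^ q * exp 2 * exp (-(((n + 1 : ℕ) : ℝ) * X ω))) ∂P =
        ENNReal.ofReal (((n + 1 : ℕ) : ℝ) ^ q * exp 2 *
          ∫ ω, exp (-(((n + 1 : ℕ) : ℝ) * X ω)) ∂P) := by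
      intro n
      rw [← integral_const_mul, ofReal_integral_eq_lintegral_ofReal ((hint n).const_mul _)
        (Filter.Eventually.of_forall fun ω => by positivity)]
    simp_rw [heq]
    refine lt_top_iff_ne_top.2 (Summable.tsum_ofReal_ne_top ?_)
    have hs : Summable fun n : ℕ => (exp 2 * C) * ((n + 1 : ℕ) : ℝ) ^ (-2 : ℝ) :=
      ((summable_nat_add_iff 1).2 (Real.summable_nat_rpow.2 (by norm_num : (-2 : ℝ) < -1))).mul_left _
    refine hs.of_norm_bounded_eventually_nat ?_
    filter_upwards [Filter.eventually_ge_atTop ⌈L⌉₊] with n hn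
    have hn' : L ≤ ((n + 1 : ℕ) : ℝ) := by
      have := Nat.ceil_le.1 hn
      push_cast; linarith
    have hpos : (0 : ℝ) < ((n + 1 : ℕ) : ℝ) := by positivity
    have hI : 0 ≤ ∫ ω, exp (-(((n + 1 : ℕ) : ℝ) * X ω)) ∂P :=
      integral_nonneg fun ω => (exp_pos _).le
    rw [norm_of_nonneg (by positivity)]
    calc _ ≤ ((n + 1 : ℕ) : ℝ) ^ q * exp 2 * (C * ((n + 1 : ℕ) : ℝ) ^ (-(q + 2))) :=
          mul_le_mul_of_nonneg_left (h _ hn') (by positivity)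
      _ = (exp 2 * C) * (((n + 1 : ℕ) : ℝ) ^ q * ((n + 1 : ℕ) : ℝ) ^ (-(q + 2))) := by ring
      _ = _ := by
          rw [← rpow_add hpos]
          congr 2
          ring
  refine ⟨?_, key⟩
  have hfin := ae_lt_top (by fun_prop) (key 1 one_pos).ne
  filter_upwards [hfin] with ω hω
  refine (hnn ω).lt_of_ne fun h0 => ?_
  simp [← h0] at hω
end

section
/- Let T > 0, let 0 = t_0 < t_1 < ... < t_n = T, and for each k = 1, ..., n let Φ_k : [0, T] → ℝ^{d×m} be a measurable, square-integrable matrix-valued function such that Φ_k(s) = 0 for almost every s > t_k. Let V be the n×n block matrix (with d×d blocks) whose (j, k) block is ∫_0^T Φ_j(s) Φ_k(s)^⊤ ds. Then for every v = (v_1, ..., v_n) ∈ (ℝ^d)^n one has the lower bound ⟨v, V v⟩ ≥ Σ_{j=1}^{n−1} 1{v_j ≠ 0 and v_{j+1} = ... = v_n = 0} · ∫_{t_{j−1}}^{t_j} ‖Φ_j(s)^⊤ v_j‖² ds + 1{v_n ≠ 0} · ∫_{t_{n−1}}^{t_n} ‖Φ_n(s)^⊤ v_n‖² ds, where 1{·}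 denotes the indicator of the stated condition. -/
/-!
Write `F s = ∑ k, (Φ k s)ᵀ v k`. Bilinearity gives `⟨v, V v⟩ = ∫_0^T ‖F s‖² ds`
(`dotProduct_gram_mulVec`); square-integrability is what allows the sums to be exchanged with the
integral. At most one indicator on the left-hand side is nonzero, namely that of the last index `j`
with `v j ≠ 0`. For almost every `s` in `(t_{j-1}, t_j]` the terms of `F s` with `k < j` vanish
because `s > t_k`, and those with `k > j` vanish because `v k = 0`, so `F s = (Φ j s)ᵀ v j` there.
Restricting the integral of the nonnegative function `‖F s‖²` to this interval gives the bound.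
-/

open MeasureTheory Matrix

/-- The squared norm `‖∑ k, (Φ k s)ᵀ v k‖²`, written in coordinates. -/
def sqNormCombination {d m n : ℕ} (Φ : Fin n → ℝ → Matrix (Fin d) (Fin m) ℝ)
    (v : Fin n × Fin d → ℝ) (s : ℝ) : ℝ :=
  ∑ i : Fin m, (∑ p : Fin n × Fin d, v p * Φ p.1 s p.2 i) ^ 2

lemma sqNormCombination_nonneg {d m n : ℕ} (Φ : Fin n → ℝ → Matrix (Fin d) (Fin m) ℝ)
    (v : Fin n × Fin d → ℝ) (s : ℝ) : 0 ≤ sqNormCombination Φ v s :=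
  Finset.sum_nonneg fun _ _ => sq_nonneg _

lemma sqNormCombination_eq {d m n : ℕ} (Φ : Fin n → ℝ → Matrix (Fin d) (Fin m) ℝ)
    (v : Fin n × Fin d → ℝ) (s : ℝ) :
    sqNormCombination Φ v s = ∑ p : Fin n × Fin d, ∑ q : Fin n × Fin d,
      v p * v q * (Φ p.1 s * (Φ q.1 s)ᵀ) p.2 q.2 := by
  simp only [sqNormCombination, Matrix.mul_apply, Matrix.transpose_apply, sq,
    Finset.sum_mul_sum]
  simp only [Finset.mul_sum]
  rw [Finset.sum_comm]
  refine Finset.sum_congr rfl fun p _ => ?_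
  rw [Finset.sum_comm]
  refine Finset.sum_congr rfl fun q _ => Finset.sum_congr rfl fun i _ => ?_
  ring

lemma integrableOn_mul_transpose {d m n : ℕ} {T : ℝ}
    {Φ : Fin n → ℝ → Matrix (Fin d) (Fin m) ℝ}
    (hmeas : ∀ k i j, Measurable fun s => Φ k s i j)
    (hL2 : ∀ k i j, IntegrableOn (fun s => (Φ k s i j) ^ 2) (Set.Icc 0 T))
    (j k : Fin n) (a b : Fin d) :
    IntegrableOn (fun s => (Φ j s * (Φ k s)ᵀ) a b) (Set.Icc 0 T) := by
  have hmem : ∀ k i j, MemLp (fun s => Φ k s i j) 2 (volume.restrict (Set.Icc 0 T)) :=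
    fun k i j => (memLp_two_iff_integrable_sq (hmeas k i j).aestronglyMeasurable).2 (hL2 k i j)
  simp only [Matrix.mul_apply, Matrix.transpose_apply]
  exact integrable_finsetSum _ fun i _ => (hmem j a i).integrable_mul (hmem k b i)

lemma integrableOn_sqNormCombination {d m n : ℕ} {T : ℝ}
    {Φ : Fin n → ℝ → Matrix (Fin d) (Fin m) ℝ}
    (hmeas : ∀ k i j, Measurable fun s => Φ k s i j)
    (hL2 : ∀ k i j, IntegrableOn (fun s => (Φ k s i j) ^ 2) (Set.Icc 0 T))
    (v : Fin n × Fin d → ℝ) :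
    IntegrableOn (sqNormCombination Φ v) (Set.Icc 0 T) := by
  rw [funext (sqNormCombination_eq Φ v)]
  exact integrable_finsetSum _ fun p _ => integrable_finsetSum _ fun q _ =>
    (integrableOn_mul_transpose hmeas hL2 p.1 q.1 p.2 q.2).const_mul _

/-- The block Gram form is `⟨v, V v⟩ = ∫_0^T ‖∑ k, (Φ k s)ᵀ v k‖² ds`. -/
lemma dotProduct_gram_mulVec {d m n : ℕ} {T : ℝ}
    {Φ : Fin n → ℝ → Matrix (Fin d) (Fin m) ℝ}
    (hmeas : ∀ k i j, Measurable fun s => Φ k s i j)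
    (hL2 : ∀ k i j, IntegrableOn (fun s => (Φ k s i j) ^ 2) (Set.Icc 0 T))
    {V : Matrix (Fin n × Fin d) (Fin n × Fin d) ℝ}
    (hV : ∀ (j k : Fin n) (a b : Fin d),
      V (j, a) (k, b) = ∫ s in Set.Icc (0 : ℝ) T, (Φ j s * (Φ k s)ᵀ) a b)
    (v : Fin n × Fin d → ℝ) :
    v ⬝ᵥ V.mulVec v = ∫ s in Set.Icc (0 : ℝ) T, sqNormCombination Φ v s := by
  have hint := fun p q : Fin n × Fin d =>
    (integrableOn_mul_transpose hmeas hL2 p.1 q.1 p.2 q.2).const_mul (v p * v q)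
  simp only [sqNormCombination_eq]
  rw [integral_finsetSum _ fun p _ => integrable_finsetSum _ fun q _ => hint p q]
  simp only [dotProduct, Matrix.mulVec, Finset.mul_sum]
  refine Finset.sum_congr rfl fun p _ => ?_
  rw [integral_finsetSum _ fun q _ => hint p q]
  refine Finset.sum_congr rfl fun q _ => ?_
  rw [integral_const_mul, ← hV]
  ring

/-- If every block of `v` other than `v j` is either zero or multiplied by a kernel vanishing at
`s`, then only the `j`-th kernel contributes at `s`. -/
lemma sqNormCombination_eq_single {d m n : ℕ} {Φ : Fin n → ℝ → Matrix (Fin d) (Fin m) ℝ}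
    {v : Fin n × Fin d → ℝ} {s : ℝ} {j : Fin n}
    (h : ∀ k, k ≠ j → Φ k s = 0 ∨ ∀ b, v (k, b) = 0) :
    sqNormCombination Φ v s =
      ∑ i : Fin m, ((Φ j s)ᵀ.mulVec (fun b => v (j, b)) i) ^ 2 := by
  refine Finset.sum_congr rfl fun i _ => ?_
  rw [Fintype.sum_prod_type, Finset.sum_eq_single j]
  · simp [Matrix.mulVec, dotProduct, mul_comm]
  · intro k _ hk
    rcases h k hk with h | h <;> simp [h]
  · simp

open scoped Classical in
/-- For square-integrable matrix kernels `Φ k` on `[0,T]` with `Φ k` vanishing a.e. beyond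
`t k`, the quadratic form of the block Gram matrix `V` with blocks `∫_0^T Φ j Φ kᵀ` admits
the lower bound
`⟨v, V v⟩ ≥ ∑_j 1{v_j ≠ 0, v_{j+1} = ⋯ = v_n = 0} ∫_{t_{j-1}}^{t_j} ‖Φ j (s)ᵀ v_j‖² ds`
(for `j = n` the condition on later blocks is vacuous, so the last term is
`1{v_n ≠ 0} ∫_{t_{n-1}}^{t_n} ‖Φ n (s)ᵀ v_n‖² ds`). -/
theorem block_gram_quadratic_form_lower_bound
    (d m n : ℕ) (hd : 0 < d) (hm : 0 < m) (hn : 0 < n)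
    (T : ℝ) (hT : 0 < T)
    (t : ℕ → ℝ) (ht0 : t 0 = 0) (htn : t n = T) (htmono : ∀ k < n, t k < t (k + 1))
    (Φ : Fin n → ℝ → Matrix (Fin d) (Fin m) ℝ)
    (hmeas : ∀ k i j, Measurable fun s => Φ k s i j)
    (hL2 : ∀ k i j, IntegrableOn (fun s => (Φ k s i j) ^ 2) (Set.Icc 0 T))
    (hvanish : ∀ k : Fin n, ∀ᵐ s ∂(volume : Measure ℝ), t (k.1 + 1) < s → Φ k s = 0)
    (V : Matrix (Fin n × Fin d) (Fin n × Fin d) ℝ)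
    (hV : ∀ (j k : Fin n) (a b : Fin d),
      V (j, a) (k, b) = ∫ s in Set.Icc (0 : ℝ) T, (Φ j s * (Φ k s)ᵀ) a b) :
    ∀ v : Fin n × Fin d → ℝ,
      (∑ j : Fin n,
        if (fun b => v (j, b)) ≠ (0 : Fin d → ℝ)
            ∧ ∀ k : Fin n, j < k → (fun b => v (k, b)) = (0 : Fin d → ℝ) then
          ∫ s in Set.Ioc (t j.1) (t (j.1 + 1)),
            ∑ i : Fin m, ((Φ j s)ᵀ.mulVec (fun b => v (j, b)) i) ^ 2
        else 0)
        ≤ v ⬝ᵥ V.mulVec v := by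
  intro v
  rw [dotProduct_gram_mulVec hmeas hL2 hV]
  have hmono : ∀ a b, a ≤ b → b ≤ n → t a ≤ t b := by
    intro a b hab
    induction b, hab using Nat.le_induction with
    | base => exact fun _ => le_rfl
    | succ b _ ih => exact fun hb => (ih (by omega)).trans (htmono b (by omega)).le
  by_cases hex : ∃ j : Fin n, (fun b => v (j, b)) ≠ (0 : Fin d → ℝ)
      ∧ ∀ k : Fin n, j < k → (fun b => v (k, b)) = (0 : Fin d → ℝ)
  · obtain ⟨j, hj⟩ := hex
    rw [Finset.sum_eq_single j, if_pos hj]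
    · have hsub : Set.Ioc (t j.1) (t (j.1 + 1)) ⊆ Set.Icc 0 T := by
        intro s hs
        have h0 := hmono 0 j.1 (by omega) (by omega)
        have h1 := hmono (j.1 + 1) n (by omega) le_rfl
        rw [ht0] at h0
        rw [htn] at h1
        exact ⟨h0.trans hs.1.le, hs.2.trans h1⟩
      have hcongr : ∫ s in Set.Ioc (t j.1) (t (j.1 + 1)),
            ∑ i : Fin m, ((Φ j s)ᵀ.mulVec (fun b => v (j, b)) i) ^ 2
          = ∫ s in Set.Ioc (t j.1) (t (j.1 + 1)), sqNormCombination Φ v s := by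
        refine setIntegral_congr_ae measurableSet_Ioc ?_
        filter_upwards [ae_all_iff.2 hvanish] with s hs hsj
        refine (sqNormCombination_eq_single fun k hk => ?_).symm
        rcases lt_or_gt_of_ne hk with hk | hk
        · exact Or.inl (hs k ((hmono (k.1 + 1) j.1 hk (by omega)).trans_lt hsj.1))
        · exact Or.inr fun b => congrFun (hj.2 k hk) b
      rw [hcongr]
      exact setIntegral_mono_set (integrableOn_sqNormCombination hmeas hL2 v)
        (Filter.Eventually.of_forall fun s => sqNormCombination_nonneg Φ v s)
        hsub.eventuallyLE
    · intro k _ hk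
      refine if_neg fun h => ?_
      rcases lt_or_gt_of_ne hk with hk | hk
      · exact hj.1 (h.2 j hk)
      · exact h.1 (hj.2 k hk)
    · simp
  · rw [Finset.sum_eq_zero fun j _ => if_neg fun h => hex ⟨j, h⟩]
    exact integral_nonneg fun s => sqNormCombination_nonneg Φ v s
end
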